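/- arXiv:1607.05429 — 2 statements merged into one kernel-verified Lean document; each statement's English description precedes it below -/
import Mathlib

section
/- Let N, finite index types m and n, A : Matrix m m ℝ, and for each i : Fin N matrices B i : Matrix m n ℝ, C i : Matrix n m ℝ, D i : Matrix n n ℝ with every D i invertible be given. Let J be the arrowhead block matrix Matrix.fromBlocks A B' C' (Matrix.blockDiagonal D), where B' p (i,q) = B i p q and C' (i,p) q = C i p q. Then J is invertible (IsUnit J) if and only if the reduced matrix A - ∑ i : Fin N, (B i) * (D i)⁻¹ * (C i) is invertible. -/
open Matrix

/-- The full arrowhead multiscale Jacobian is invertible iff its macroscale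
Schur-complement (reduced) Jacobian is invertible. (Mathlib's `Matrix.blockDiagonal`
is indexed by `n × Fin N`, with the block index `i : Fin N` in the second component.) -/
theorem arrowhead_isUnit_iff_schur_isUnit
    (N : ℕ) (m n : Type*) [Fintype m] [Fintype n] [DecidableEq m] [DecidableEq n]
    (A : Matrix m m ℝ) (B : Fin N → Matrix m n ℝ) (C : Fin N → Matrix n m ℝ)
    (D : Fin N → Matrix n n ℝ) (hD : ∀ i, IsUnit (D i)) :
    IsUnit (Matrix.fromBlocks A
        (Matrix.of fun p (qi : n × Fin N) => B qi.2 p qi.1)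
        (Matrix.of fun (pi : n × Fin N) q => C pi.2 pi.1 q)
        (Matrix.blockDiagonal D)) ↔
      IsUnit (A - ∑ i : Fin N, B i * (D i)⁻¹ * C i) := by
  have h1 : blockDiagonal D * blockDiagonal (fun i => (D i)⁻¹) = 1 := by
    rw [← blockDiagonal_mul, ← blockDiagonal_one]
    congr 1
    funext i
    exact Matrix.mul_nonsing_inv _ ((Matrix.isUnit_iff_isUnit_det _).1 (hD i))
  letI : Invertible (blockDiagonal D) :=
    ⟨blockDiagonal (fun i => (D i)⁻¹), mul_eq_one_comm.1 h1, h1⟩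
  rw [isUnit_fromBlocks_iff_of_invertible₂₂]
  have h2 : (Matrix.of fun p (qi : n × Fin N) => B qi.2 p qi.1) * ⅟(blockDiagonal D) *
      (Matrix.of fun (pi : n × Fin N) q => C pi.2 pi.1 q) =
      ∑ i : Fin N, B i * (D i)⁻¹ * C i := by
    have h3 : ⅟(blockDiagonal D) = blockDiagonal (fun i => (D i)⁻¹) := rfl
    rw [h3]
    ext p q
    rw [Matrix.sum_apply]
    simp only [Matrix.mul_apply, Matrix.of_apply, blockDiagonal_apply, Fintype.sum_prod_type_right,
      mul_ite, mul_zero]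
    refine Finset.sum_congr rfl fun i _ => Finset.sum_congr rfl fun j _ => ?_
    congr 1
    rw [Finset.sum_eq_single i]
    · simp
    · intro b _ hb
      simp [hb]
    · simp
  rw [h2]
end

section
/- Let C_sol, C_com, C_jac, N_NR, N_TW, N_TS, N_WR, N_GP, N_dim and κ be real numbers with C_sol > 0, C_com > 0, C_jac > 0, N_NR > 0, N_TW > 0, N_TS > 0, N_WR > 0, N_GP > 0, N_dim > 0 and 0 < κ < 1. Assume: (1) (N_TW / N_TS) * N_NR * C_jac = κ * (C_sol + (N_TW / N_TS) * C_com); (2) N_WR * (1 + κ) < N_NR * N_dim (i.e. N_WR < N_dim * N_NR / (1 + κ)); and (3) N_dim * N_TW ≤ N_TS. Then the waveform relaxation cost is strictly smaller than the monolithic cost: N_TS * N_WR * N_GP * (C_sol + (N_TW / N_TS) * (N_NR * C_jac + C_com)) < N_TS * N_NR * N_GP * (N_dim * C_sol + C_com). -/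
/-- Efficiency criterion of the waveform relaxation HMM: under the paper's assumptions,
in particular `N_WR < N_dim N_NR / (1 + κ)` and sufficiently many time steps per time
window, the waveform relaxation cost is strictly smaller than the monolithic cost. -/
theorem wr_cheaper_than_monolithic
    (C_sol C_com C_jac N_NR N_TW N_TS N_WR N_GP N_dim κ : ℝ)
    (hCsol : 0 < C_sol) (hCcom : 0 < C_com) (hCjac : 0 < C_jac)
    (hNNR : 0 < N_NR) (hNTW : 0 < N_TW) (hNTS : 0 < N_TS) (hNWR : 0 < N_WR)
    (hNGP : 0 < N_GP) (hNdim : 0 < N_dim) (hκ0 : 0 < κ) (hκ1 : κ < 1)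
    (hjac : (N_TW / N_TS) * N_NR * C_jac = κ * (C_sol + (N_TW / N_TS) * C_com))
    (hWR : N_WR * (1 + κ) < N_NR * N_dim)
    (hwin : N_dim * N_TW ≤ N_TS) :
    N_TS * N_WR * N_GP * (C_sol + (N_TW / N_TS) * (N_NR * C_jac + C_com))
      < N_TS * N_NR * N_GP * (N_dim * C_sol + C_com) := by
  have hr : 0 < N_TW / N_TS := div_pos hNTW hNTS
  have hd : N_dim * (N_TW / N_TS) ≤ 1 := by
    rw [← mul_div_assoc]
    exact (div_le_one hNTS).2 hwin
  generalize N_TW / N_TS = r at *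
  have hpos : 0 < C_sol + r * C_com := by positivity
  have e : C_sol + r * (N_NR * C_jac + C_com) = (1 + κ) * (C_sol + r * C_com) := by
    linear_combination hjac
  have h1 : N_WR * (1 + κ) * (C_sol + r * C_com) < N_NR * N_dim * (C_sol + r * C_com) :=
    mul_lt_mul_of_pos_right hWR hpos
  have h2 : N_NR * C_com * (N_dim * r) ≤ N_NR * C_com * 1 :=
    mul_le_mul_of_nonneg_left hd (by positivity)
  have h3 : N_WR * (1 + κ) * (C_sol + r * C_com) < N_NR * (N_dim * C_sol + C_com) := by
    linarith
  have h4 := mul_lt_mul_of_pos_left h3 (mul_pos hNTS hNGP)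
  rw [e]
  linarith
end
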